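/- arXiv:2402.02459 — 2 statements merged into one kernel-verified Lean document; each statement's English description precedes it below -/
import Mathlib

section
/- For every Σ ∈ S^p and every τ > 0, the function F(L,D) = τ‖L‖_* + (1/2)‖Σ − (L+D)‖_F² is convex on the set {(L,D) : L ∈ S^p_+, D = pdiag(D)}, and it attains its minimum over this set at a unique point. -/
open Matrix MeasureTheory ProbabilityTheory BigOperators

/-- `pdiag M`: the matrix `M` with all off-diagonal entries set to zero. -/
def pdiag {p : ℕ} (M : Matrix (Fin p) (Fin p) ℝ) : Matrix (Fin p) (Fin p) ℝ :=
  Matrix.of fun i j => if i = j then M i j else 0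

/-- `poffdiag M = M - pdiag M`: the off-diagonal part of `M`. -/
def poffdiag {p : ℕ} (M : Matrix (Fin p) (Fin p) ℝ) : Matrix (Fin p) (Fin p) ℝ :=
  M - pdiag M

/-- Frobenius norm of a real matrix. -/
noncomputable def frobNorm {p q : ℕ} (M : Matrix (Fin p) (Fin q) ℝ) : ℝ :=
  Real.sqrt (∑ i, ∑ j, (M i j) ^ 2)

/-- The singular values of a real matrix (as the square roots of the eigenvalues of `Mᵀ M`,
in no particular order, with multiplicity, padded by zeros). -/
noncomputable def singVals {p q : ℕ} (M : Matrix (Fin p) (Fin q) ℝ) : Fin q → ℝ :=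
  fun i => Real.sqrt ((Matrix.posSemidef_conjTranspose_mul_self M).isHermitian.eigenvalues i)

/-- Nuclear norm: sum of the singular values. -/
noncomputable def nucNorm {p q : ℕ} (M : Matrix (Fin p) (Fin q) ℝ) : ℝ :=
  ∑ i, singVals M i

/-- Spectral (operator) norm: the largest singular value. -/
noncomputable def specNorm {p q : ℕ} (M : Matrix (Fin p) (Fin q) ℝ) : ℝ :=
  ⨆ i, singVals M i

/-- `(2,∞)`-norm: the maximal Euclidean norm of a row. -/
noncomputable def rowNorm {p r : ℕ} (U : Matrix (Fin p) (Fin r) ℝ) : ℝ :=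
  ⨆ i, Real.sqrt (∑ j, (U i j) ^ 2)

/-- `sinΘ` distance between two column-orthonormal matrices, measured in spectral norm:
`‖sinΘ(U, V)‖ = ‖U Uᵀ - V Vᵀ‖`. -/
noncomputable def sinTheta {p r : ℕ} (U V : Matrix (Fin p) (Fin r) ℝ) : ℝ :=
  specNorm (U * Uᵀ - V * Vᵀ)

/-- `eigDesc M k` : the `k`-th largest eigenvalue (1-indexed) of a symmetric matrix `M`. -/
noncomputable def eigDesc {p : ℕ} (M : Matrix (Fin p) (Fin p) ℝ) (k : ℕ) : ℝ :=
  if h : M.IsHermitian then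
    (((List.ofFn h.eigenvalues).insertionSort (· ≥ ·)).getD (k - 1) 0)
  else 0

/-- `svDesc M k` : the `k`-th largest singular value (1-indexed) of `M`. -/
noncomputable def svDesc {p q : ℕ} (M : Matrix (Fin p) (Fin q) ℝ) (k : ℕ) : ℝ :=
  (((List.ofFn (singVals M)).insertionSort (· ≥ ·)).getD (k - 1) 0)

/-- Eigenvalue soft-thresholding operator `D_τ⁺`: for a symmetric matrix
`M = Σᵢ λᵢ uᵢ uᵢᵀ`, `D_τ⁺(M) = Σᵢ max (λᵢ - τ) 0 • uᵢ uᵢᵀ` (junk value `0` otherwise). -/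
noncomputable def softThresh {p : ℕ} (τ : ℝ) (M : Matrix (Fin p) (Fin p) ℝ) :
    Matrix (Fin p) (Fin p) ℝ :=
  if h : M.IsHermitian then
    (h.eigenvectorUnitary : Matrix (Fin p) (Fin p) ℝ) *
      Matrix.diagonal (fun i => max (h.eigenvalues i - τ) 0) *
      (star (h.eigenvectorUnitary : Matrix (Fin p) (Fin p) ℝ))
  else 0

/-- The `p × r` matrix whose columns are (orthonormal) eigenvectors of the symmetric matrix
`M` corresponding to its `r` largest eigenvalues ("first `r` eigenvectors"). -/
noncomputable def topEigenvectors {p : ℕ} (M : Matrix (Fin p) (Fin p) ℝ) (r : ℕ) :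
    Matrix (Fin p) (Fin r) ℝ :=
  if h : M.IsHermitian then
    Matrix.of fun i (j : Fin r) =>
      if hj : (j : ℕ) < p then
        (h.eigenvectorUnitary : Matrix (Fin p) (Fin p) ℝ) i
          ((Tuple.sort h.eigenvalues) (Fin.rev ⟨(j : ℕ), hj⟩))
      else 0
  else 0

/-- The objective function `F(L, D) = τ ‖L‖_* + (1/2) ‖Σ - (L + D)‖_F²`. -/
noncomputable def objF {p : ℕ} (τ : ℝ) (S L D : Matrix (Fin p) (Fin p) ℝ) : ℝ :=
  τ * nucNorm L + (1 / 2) * (frobNorm (S - (L + D))) ^ 2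

/-- `(L, D)` is a global minimizer of the relaxed-MTFA objective `F` over
`L ∈ S^p₊` and diagonal `D`. -/
def IsRMTFAMin {p : ℕ} (τ : ℝ) (S L D : Matrix (Fin p) (Fin p) ℝ) : Prop :=
  L.PosSemidef ∧ D = pdiag D ∧
    ∀ L' D' : Matrix (Fin p) (Fin p) ℝ, L'.PosSemidef → D' = pdiag D' →
      objF τ S L D ≤ objF τ S L' D'

/-!
On the constraint set `‖L‖_*` is the trace of `L`, so `F` is a linear function plus a squared
Frobenius norm; this gives convexity. A bound on `F` bounds the trace of `L`, hence `L`, and then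
`D`, so that a minimiser exists by compactness.

By strict convexity of the squared norm, two minimisers `(L, D)` and `(L', D')` have the same sum
`L + D = L' + D'`. Hence `L - L'` is diagonal, and so is its square, which can be moved from the
first component to the second without changing the sum. As `(L - L')² ≤ C (L + L')` in the Loewner
order for some constant `C`, subtracting a small positive multiple of `(L - L')²` from
`(L + L') / 2` leaves a positive semidefinite matrix. Its trace is smaller than that of `L` or `L'`
unless `L = L'`.
-/

lemma isDiag_mul {n α : Type*} [Fintype n] [NonUnitalNonAssocSemiring α]
    {A B : Matrix n n α} (hA : A.IsDiag) (hB : B.IsDiag) : (A * B).IsDiag := by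
  classical
  rw [← hA.diagonal_diag, ← hB.diagonal_diag, diagonal_mul_diagonal]
  exact isDiag_diagonal _

section PositiveSemidefinite

open scoped MatrixOrder ComplexOrder

variable {n 𝕜 : Type*} [RCLike 𝕜]

lemma isClosed_setOf_posSemidef [Finite n] : IsClosed {A : Matrix n n 𝕜 | A.PosSemidef} := by
  have := Fintype.ofFinite n
  simp only [posSemidef_iff_dotProduct_mulVec, IsHermitian, Set.ofPred_and, Set.ofPred_forall]
  exact (isClosed_eq (by fun_prop) continuous_id).inter <|
    isClosed_iInter fun v => isClosed_le continuous_const (by fun_prop)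

variable [Fintype n] {A B : Matrix n n 𝕜}

lemma trace_cfc_eq_sum_eigenvalues [DecidableEq n] (hA : A.IsHermitian) (f : ℝ → ℝ) :
    (cfc f A).trace = ∑ i, (f (hA.eigenvalues i) : 𝕜) := by
  rw [hA.cfc_eq, IsHermitian.cfc, Unitary.conjStarAlgAut_apply, trace_mul_cycle]
  simp [trace_diagonal]

lemma le_trace_smul_one [DecidableEq n] (hA : A.PosSemidef) : A ≤ A.trace • 1 := by
  have hspec : ∀ x ∈ spectrum ℝ A, x ≤ ∑ i, hA.isHermitian.eigenvalues i := by
    rw [hA.isHermitian.spectrum_real_eq_range_eigenvalues]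
    rintro _ ⟨i, rfl⟩
    exact Finset.single_le_sum (fun j _ => hA.eigenvalues_nonneg j) (Finset.mem_univ i)
  have h := le_algebraMap_of_spectrum_le hspec hA.isHermitian.isSelfAdjoint
  rwa [Algebra.algebraMap_eq_smul_one, RCLike.real_smul_eq_coe_smul (K := 𝕜),
    RCLike.ofReal_sum, ← hA.isHermitian.trace_eq_sum_eigenvalues] at h

lemma mul_self_le_trace_smul (hA : A.PosSemidef) : A * A ≤ A.trace • A := by
  classical
  obtain ⟨R, hR, rfl⟩ : ∃ R : Matrix n n 𝕜, 0 ≤ R ∧ R * R = A :=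
    ⟨CFC.sqrt A, CFC.sqrt_nonneg A, CFC.sqrt_mul_sqrt_self A hA.nonneg⟩
  calc R * R * (R * R) = R * (R * R) * R := by noncomm_ring
    _ ≤ R * ((R * R).trace • 1) * R := conjugate_le_conjugate_of_nonneg (le_trace_smul_one hA) hR
    _ = (R * R).trace • (R * R) := by simp

lemma sub_mul_self_le_two_nsmul (hA : A.IsHermitian) (hB : B.IsHermitian) :
    (A - B) * (A - B) ≤ 2 • (A * A + B * B) := by
  have hid : 2 • (A * A + B * B) - (A - B) * (A - B) = (A + B) * (A + B) := by noncomm_ring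
  rw [le_iff, hid]
  simpa only [(hA.add hB).eq] using posSemidef_conjTranspose_mul_self (A + B)

lemma sub_mul_self_le_trace_smul (hA : A.PosSemidef) (hB : B.PosSemidef) :
    (A - B) * (A - B) ≤ (2 * (A.trace + B.trace)) • (A + B) := by
  calc (A - B) * (A - B) ≤ 2 • (A * A + B * B) :=
        sub_mul_self_le_two_nsmul hA.isHermitian hB.isHermitian
    _ ≤ 2 • ((A.trace + B.trace) • A + (A.trace + B.trace) • B) := by
        gcongr 2 • (?_ + ?_)
        · exact (mul_self_le_trace_smul hA).trans <|
            smul_le_smul_of_nonneg_right (le_add_of_nonneg_right hB.trace_nonneg) hA.nonneg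
        · exact (mul_self_le_trace_smul hB).trans <|
            smul_le_smul_of_nonneg_right (le_add_of_nonneg_left hA.trace_nonneg) hB.nonneg
    _ = (2 * (A.trace + B.trace)) • (A + B) := by module

lemma exists_pos_smul_sub_mul_self_le (hA : A.PosSemidef) (hB : B.PosSemidef) :
    ∃ ε : 𝕜, 0 < ε ∧ ε • ((A - B) * (A - B)) ≤ A + B := by
  set t : 𝕜 := 2 * (A.trace + B.trace)
  have ht : 0 ≤ t := mul_nonneg zero_le_two (add_nonneg hA.trace_nonneg hB.trace_nonneg)
  have ht1 : 0 < 1 + t := add_pos_of_pos_of_nonneg one_pos ht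
  refine ⟨(1 + t)⁻¹, RCLike.inv_pos.mpr ht1, ?_⟩
  have h : (A - B) * (A - B) ≤ (1 + t) • (A + B) :=
    (sub_mul_self_le_trace_smul hA hB).trans <|
      smul_le_smul_of_nonneg_right (le_add_of_nonneg_left zero_le_one) (hA.add hB).nonneg
  simpa only [inv_smul_smul₀ ht1.ne'] using
    smul_le_smul_of_nonneg_left h (RCLike.inv_pos.mpr ht1).le

lemma exists_posSemidef_two_mul_trace_lt (hA : A.PosSemidef) (hB : B.PosSemidef)
    (hAB : (A - B).IsDiag) (hne : A ≠ B) :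
    ∃ C : Matrix n n 𝕜, C.PosSemidef ∧ (A - C).IsDiag ∧ 2 * C.trace < A.trace + B.trace := by
  classical
  obtain ⟨ε, hε, hle⟩ := exists_pos_smul_sub_mul_self_le hA hB
  set Q := (A - B) * (A - B) with hQ
  have hQd : Q.IsDiag := isDiag_mul hAB hAB
  have hQtr : 0 < Q.trace := by
    have hH : (A - B)ᴴ = A - B := (hA.isHermitian.sub hB.isHermitian).eq
    refine lt_of_le_of_ne ?_ fun h => hne ?_
    · simpa only [hQ, hH] using (posSemidef_conjTranspose_mul_self (A - B)).trace_nonneg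
    · rw [← sub_eq_zero, ← trace_conjTranspose_mul_self_eq_zero_iff, hH, ← hQ, h]
  refine ⟨(2⁻¹ : 𝕜) • (A + B - ε • Q), (le_iff.mp hle).smul (by simp), ?_, ?_⟩
  · rw [show A - (2⁻¹ : 𝕜) • (A + B - ε • Q) = (2⁻¹ : 𝕜) • (A - B + ε • Q) by module]
    exact (hAB.add (hQd.smul ε)).smul _
  · rw [trace_smul, smul_eq_mul, mul_inv_cancel_left₀ two_ne_zero, trace_sub, trace_add, trace_smul]
    exact sub_lt_self _ (mul_pos hε hQtr)

end PositiveSemidefinite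

lemma norm_sq_smul_add_smul {E : Type*} [SeminormedAddCommGroup E] [InnerProductSpace ℝ E]
    (x y : E) {a b : ℝ} (hab : a + b = 1) :
    ‖a • x + b • y‖ ^ 2 = a * ‖x‖ ^ 2 + b * ‖y‖ ^ 2 - a * b * ‖x - y‖ ^ 2 := by
  obtain rfl := eq_sub_of_add_eq hab
  rw [norm_add_sq_real, norm_sub_sq_real, norm_smul, norm_smul, mul_pow, mul_pow,
    real_inner_smul_left, real_inner_smul_right, Real.norm_eq_abs, Real.norm_eq_abs, sq_abs, sq_abs]
  ring

section FrobeniusNorm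

open scoped Matrix.Norms.Frobenius

variable {m n : Type*} [Fintype m] [Fintype n]

lemma frobenius_norm_sq {α : Type*} [SeminormedAddCommGroup α] (A : Matrix m n α) :
    ‖A‖ ^ 2 = ∑ i, ∑ j, ‖A i j‖ ^ 2 := by
  rw [frobenius_norm_def, ← Real.sqrt_eq_rpow, Real.sq_sqrt (by positivity)]
  simp only [Real.rpow_two]

lemma frobenius_norm_sq_eq_trace {𝕜 : Type*} [RCLike 𝕜] (A : Matrix m n 𝕜) :
    ((‖A‖ ^ 2 : ℝ) : 𝕜) = (Aᴴ * A).trace := by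
  rw [frobenius_norm_sq, Finset.sum_comm]
  simp [trace, mul_apply, RCLike.conj_mul]

open scoped MatrixOrder ComplexOrder in
lemma frobenius_norm_le_norm_trace {𝕜 : Type*} [RCLike 𝕜] {A : Matrix n n 𝕜}
    (hA : A.PosSemidef) : ‖A‖ ≤ ‖A.trace‖ := by
  classical
  obtain ⟨B, rfl⟩ := CStarAlgebra.nonneg_iff_eq_star_mul_self.mp hA.nonneg
  rw [star_eq_conjTranspose]
  calc ‖Bᴴ * B‖ ≤ ‖Bᴴ‖ * ‖B‖ := frobenius_norm_mul _ _
    _ = ‖B‖ ^ 2 := by rw [frobenius_norm_conjTranspose, sq]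
    _ = ‖(Bᴴ * B).trace‖ := by
        rw [← frobenius_norm_sq_eq_trace, RCLike.norm_of_nonneg (by positivity)]

lemma frobenius_norm_sq_smul_add_smul {E : Type*} [SeminormedAddCommGroup E]
    [InnerProductSpace ℝ E] (A B : Matrix m n E) {a b : ℝ} (hab : a + b = 1) :
    ‖a • A + b • B‖ ^ 2 = a * ‖A‖ ^ 2 + b * ‖B‖ ^ 2 - a * b * ‖A - B‖ ^ 2 := by
  simp only [frobenius_norm_sq, Matrix.add_apply, Matrix.smul_apply, Matrix.sub_apply,
    norm_sq_smul_add_smul _ _ hab, Finset.mul_sum, Finset.sum_add_distrib, Finset.sum_sub_distrib]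

end FrobeniusNorm

section RMTFA

open scoped MatrixOrder Matrix.Norms.Frobenius

variable {p : ℕ} {τ a b : ℝ} {S L D L' D' : Matrix (Fin p) (Fin p) ℝ}

lemma frobNorm_eq_norm {q : ℕ} (M : Matrix (Fin p) (Fin q) ℝ) : frobNorm M = ‖M‖ := by
  rw [frobNorm, Real.sqrt_eq_iff_mul_self_eq (by positivity) (norm_nonneg M), ← sq,
    frobenius_norm_sq]
  simp only [Real.norm_eq_abs, sq_abs]

lemma nucNorm_eq_trace_sqrt {q : ℕ} (M : Matrix (Fin p) (Fin q) ℝ) :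
    nucNorm M = (CFC.sqrt (Mᴴ * M)).trace := by
  have hM := posSemidef_conjTranspose_mul_self M
  rw [CFC.sqrt_eq_real_sqrt _ hM.nonneg, cfcₙ_eq_cfc,
    trace_cfc_eq_sum_eigenvalues hM.isHermitian]
  rfl

lemma nucNorm_eq_trace (hL : L.PosSemidef) : nucNorm L = L.trace := by
  rw [nucNorm_eq_trace_sqrt, hL.isHermitian.eq, CFC.sqrt_mul_self L hL.nonneg]

lemma eq_pdiag_iff_isDiag : D = pdiag D ↔ D.IsDiag := by
  have hpdiag : pdiag D = diagonal D.diag := by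
    ext i j
    rcases eq_or_ne i j with rfl | hij <;> simp [pdiag, *]
  rw [hpdiag, eq_comm, ← isDiag_iff_diagonal_diag]

variable (p) in
/-- The constraint set `{(L, D) : L ∈ S^p₊, D = pdiag D}` of the relaxed-MTFA problem,
as a set of pairs. -/
def rmtfaFeasible : Set (Matrix (Fin p) (Fin p) ℝ × Matrix (Fin p) (Fin p) ℝ) :=
  {x | x.1.PosSemidef ∧ x.2 = pdiag x.2}

lemma mk_mem_rmtfaFeasible : (L, D) ∈ rmtfaFeasible p ↔ L.PosSemidef ∧ D.IsDiag :=
  and_congr_right' eq_pdiag_iff_isDiag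

lemma zero_mem_rmtfaFeasible : 0 ∈ rmtfaFeasible p :=
  mk_mem_rmtfaFeasible.mpr ⟨.zero, isDiag_zero⟩

lemma convex_rmtfaFeasible : Convex ℝ (rmtfaFeasible p) := by
  rintro ⟨L, D⟩ hx ⟨L', D'⟩ hy a b ha hb -
  rw [mk_mem_rmtfaFeasible] at hx hy
  exact mk_mem_rmtfaFeasible.mpr
    ⟨(hx.1.smul ha).add (hy.1.smul hb), (hx.2.smul a).add (hy.2.smul b)⟩

lemma isClosed_rmtfaFeasible : IsClosed (rmtfaFeasible p) := by
  refine (isClosed_setOf_posSemidef.preimage continuous_fst).inter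
    (isClosed_eq continuous_snd (continuous_matrix fun i j => ?_))
  simp only [pdiag, of_apply]
  split_ifs <;> fun_prop

lemma objF_eq_of_posSemidef (τ : ℝ) (S D : Matrix (Fin p) (Fin p) ℝ) (hL : L.PosSemidef) :
    objF τ S L D = τ * L.trace + 1 / 2 * ‖S - (L + D)‖ ^ 2 := by
  rw [objF, nucNorm_eq_trace hL, frobNorm_eq_norm]

lemma objF_smul_add_smul (τ : ℝ) (S D D' : Matrix (Fin p) (Fin p) ℝ) (hL : L.PosSemidef)
    (hL' : L'.PosSemidef) (ha : 0 ≤ a) (hb : 0 ≤ b) (hab : a + b = 1) :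
    objF τ S (a • L + b • L') (a • D + b • D') =
      a * objF τ S L D + b * objF τ S L' D' - 1 / 2 * (a * b) * ‖(L + D) - (L' + D')‖ ^ 2 := by
  have hres : S - (a • L + b • L' + (a • D + b • D')) =
      a • (S - (L + D)) + b • (S - (L' + D')) := by
    obtain rfl := eq_sub_of_add_eq hab
    module
  rw [objF_eq_of_posSemidef _ _ _ ((hL.smul ha).add (hL'.smul hb)), objF_eq_of_posSemidef _ _ _ hL,
    objF_eq_of_posSemidef _ _ _ hL', hres, frobenius_norm_sq_smul_add_smul _ _ hab,
    sub_sub_sub_cancel_left, norm_sub_rev (L' + D'), trace_add, trace_smul, trace_smul, smul_eq_mul,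
    smul_eq_mul]
  ring

lemma convexOn_objF (τ : ℝ) (S : Matrix (Fin p) (Fin p) ℝ) :
    ConvexOn ℝ (rmtfaFeasible p) fun x => objF τ S x.1 x.2 := by
  refine ⟨convex_rmtfaFeasible, fun x hx y hy a b ha hb hab => ?_⟩
  simp only [Prod.fst_add, Prod.snd_add, Prod.smul_fst, Prod.smul_snd, smul_eq_mul,
    objF_smul_add_smul τ S x.2 y.2 hx.1 hy.1 ha hb hab]
  exact sub_le_self _ (by positivity)

lemma continuousOn_objF (τ : ℝ) (S : Matrix (Fin p) (Fin p) ℝ) :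
    ContinuousOn (fun x => objF τ S x.1 x.2) (rmtfaFeasible p) := by
  refine ContinuousOn.congr (Continuous.continuousOn ?_)
    fun x hx => objF_eq_of_posSemidef τ S x.2 hx.1
  exact (continuous_const.mul continuous_fst.matrix_trace).add (by fun_prop)

lemma isBounded_setOf_objF_le (hτ : 0 < τ) (S : Matrix (Fin p) (Fin p) ℝ) (c : ℝ) :
    Bornology.IsBounded {x ∈ rmtfaFeasible p | objF τ S x.1 x.2 ≤ c} := by
  refine isBounded_iff_forall_norm_le.mpr ⟨‖S‖ + c / τ + √(2 * c), ?_⟩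
  rintro ⟨L, D⟩ ⟨⟨hL, -⟩, hc⟩
  rw [objF_eq_of_posSemidef τ S D hL] at hc
  have htr : 0 ≤ L.trace := hL.trace_nonneg
  have hL_le : ‖L‖ ≤ c / τ := by
    refine (frobenius_norm_le_norm_trace hL).trans ?_
    rw [Real.norm_of_nonneg htr, le_div_iff₀' hτ]
    linarith [sq_nonneg ‖S - (L + D)‖]
  have hres_le : ‖S - (L + D)‖ ≤ √(2 * c) := by
    refine Real.le_sqrt_of_sq_le ?_
    linarith [mul_nonneg hτ.le htr]
  have hD_le : ‖D‖ ≤ ‖S‖ + ‖L‖ + ‖S - (L + D)‖ := by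
    calc ‖D‖ = ‖S - L - (S - (L + D))‖ := by congr 1; abel
      _ ≤ ‖S‖ + ‖L‖ + ‖S - (L + D)‖ := norm_sub_le_of_le (norm_sub_le _ _) le_rfl
  rw [norm_prod_le_iff]
  constructor <;> linarith [norm_nonneg S, Real.sqrt_nonneg (2 * c)]

lemma isRMTFAMin_iff_isMinOn {x : Matrix (Fin p) (Fin p) ℝ × Matrix (Fin p) (Fin p) ℝ} :
    IsRMTFAMin τ S x.1 x.2 ↔
      x ∈ rmtfaFeasible p ∧ IsMinOn (fun x => objF τ S x.1 x.2) (rmtfaFeasible p) x :=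
  ⟨fun h => ⟨⟨h.1, h.2.1⟩, fun y hy => h.2.2 y.1 y.2 hy.1 hy.2⟩,
    fun h => ⟨h.1.1, h.1.2, fun L D hL hD => isMinOn_iff.mp h.2 (L, D) ⟨hL, hD⟩⟩⟩

lemma exists_isRMTFAMin (hτ : 0 < τ) (S : Matrix (Fin p) (Fin p) ℝ) :
    ∃ x : Matrix (Fin p) (Fin p) ℝ × Matrix (Fin p) (Fin p) ℝ, IsRMTFAMin τ S x.1 x.2 := by
  simp only [isRMTFAMin_iff_isMinOn]
  refine (continuousOn_objF τ S).exists_isMinOn' isClosed_rmtfaFeasible zero_mem_rmtfaFeasible ?_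
  have hbdd := isBounded_setOf_objF_le hτ S (objF τ S 0 0)
  rw [Bornology.isBounded_def, Metric.cobounded_eq_cocompact] at hbdd
  refine Filter.eventually_inf_principal.mpr (Filter.mem_of_superset hbdd fun x hx hxK => ?_)
  exact (not_le.mp fun hle => hx ⟨hxK, hle⟩).le

lemma IsRMTFAMin.add_eq_add (h : IsRMTFAMin τ S L D) (h' : IsRMTFAMin τ S L' D') :
    L + D = L' + D' := by
  have hmid := objF_smul_add_smul τ S D D' h.1 h'.1 one_half_pos.le one_half_pos.le
    (add_halves 1)
  obtain ⟨hM, hE⟩ := convex_rmtfaFeasible (x := (L, D)) ⟨h.1, h.2.1⟩ (y := (L', D'))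
    ⟨h'.1, h'.2.1⟩ one_half_pos.le one_half_pos.le (add_halves 1)
  have hle := h.2.2 _ _ hM hE
  have hge := h'.2.2 L D h.1 h.2.1
  have hsq : ‖(L + D) - (L' + D')‖ ^ 2 = 0 := by
    refine le_antisymm ?_ (sq_nonneg _)
    simp only [Prod.fst_add, Prod.snd_add, Prod.smul_fst, Prod.smul_snd] at hle
    linarith
  exact sub_eq_zero.mp (norm_eq_zero.mp (pow_eq_zero_iff two_ne_zero |>.mp hsq))

lemma IsRMTFAMin.trace_le_of_isDiag_sub (hτ : 0 < τ) (h : IsRMTFAMin τ S L D) (hL' : L'.PosSemidef)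
    (hdiag : (L - L').IsDiag) : L.trace ≤ L'.trace := by
  have hD : (D + (L - L')).IsDiag := (eq_pdiag_iff_isDiag.mp h.2.1).add hdiag
  have hle := h.2.2 L' _ hL' (eq_pdiag_iff_isDiag.mpr hD)
  rw [objF_eq_of_posSemidef _ _ _ h.1, objF_eq_of_posSemidef _ _ _ hL',
    show L' + (D + (L - L')) = L + D by abel] at hle
  exact le_of_mul_le_mul_left (le_of_add_le_add_right hle) hτ

lemma IsRMTFAMin.unique (hτ : 0 < τ) (h : IsRMTFAMin τ S L D) (h' : IsRMTFAMin τ S L' D') :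
    L = L' ∧ D = D' := by
  have hsum : L + D = L' + D' := h.add_eq_add h'
  have hdiag : (L - L').IsDiag := by
    rw [show L - L' = D' - D by rw [sub_eq_sub_iff_add_eq_add, hsum, add_comm]]
    exact (eq_pdiag_iff_isDiag.mp h'.2.1).sub (eq_pdiag_iff_isDiag.mp h.2.1)
  have hL : L = L' := by
    by_contra hne
    obtain ⟨C, hC, hLC, hlt⟩ := exists_posSemidef_two_mul_trace_lt h.1 h'.1 hdiag hne
    have hL'C : (L' - C).IsDiag := by simpa using hLC.sub hdiag
    linarith [h.trace_le_of_isDiag_sub hτ hC hLC, h'.trace_le_of_isDiag_sub hτ hC hL'C]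
  exact ⟨hL, add_left_cancel (hL ▸ hsum)⟩

end RMTFA

theorem rmtfa_convex_and_unique_min_general (p : ℕ) (S : Matrix (Fin p) (Fin p) ℝ)
    (τ : ℝ) (hτ : 0 < τ) :
    ConvexOn ℝ
      {x : Matrix (Fin p) (Fin p) ℝ × Matrix (Fin p) (Fin p) ℝ |
        x.1.PosSemidef ∧ x.2 = pdiag x.2}
      (fun x => objF τ S x.1 x.2) ∧
    ∃! x : Matrix (Fin p) (Fin p) ℝ × Matrix (Fin p) (Fin p) ℝ,
      IsRMTFAMin τ S x.1 x.2 := by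
  obtain ⟨x, hx⟩ := exists_isRMTFAMin hτ S
  refine ⟨convexOn_objF τ S, x, hx, fun y hy => ?_⟩
  obtain ⟨hL, hD⟩ := hy.unique hτ hx
  exact Prod.ext hL hD

/-- For every `Σ ∈ S^p` and `τ > 0`, the objective
`F(L, D) = τ‖L‖_* + (1/2)‖Σ − (L+D)‖_F²` is convex on
`{(L, D) : L ∈ S^p₊, D = pdiag D}` and attains its minimum there at a unique point. -/
theorem rmtfa_convex_and_unique_min (p : ℕ) (S : Matrix (Fin p) (Fin p) ℝ)
    (hS : S.IsHermitian) (τ : ℝ) (hτ : 0 < τ) :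
    ConvexOn ℝ
      {x : Matrix (Fin p) (Fin p) ℝ × Matrix (Fin p) (Fin p) ℝ |
        x.1.PosSemidef ∧ x.2 = pdiag x.2}
      (fun x => objF τ S x.1 x.2) ∧
    ∃! x : Matrix (Fin p) (Fin p) ℝ × Matrix (Fin p) (Fin p) ℝ,
      IsRMTFAMin τ S x.1 x.2 :=
  rmtfa_convex_and_unique_min_general p S τ hτ
end

section
/- Let Σ ∈ S^p have strictly positive diagonal entries, and for τ > 0 let (L̂(τ), D̂(τ)) be the unique minimizer of F(L,D) = τ‖L‖_* + (1/2)‖Σ − (L+D)‖_F² over L ∈ S^p_+ and diagonal D. Then there exists τ₀ > 0 such that for all τ ≥ τ₀, every diagonal entry [D̂(τ)]ᵢᵢ is strictly positive. -/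
open Matrix MeasureTheory ProbabilityTheory BigOperators

/-!
For fixed `L`, the objective is minimized over diagonal `D` exactly at `D = pdiag (S - L)`, so a
minimizer has `Dᵢᵢ = Sᵢᵢ - Lᵢᵢ`. Comparing it with the feasible pair `(0, pdiag S)` gives
`τ ‖L‖_* ≤ ‖poffdiag S‖_F² / 2`, a bound independent of `τ`. Hence `Lᵢᵢ ≤ ‖L‖_F ≤ ‖L‖_*` tends to
zero as `τ` grows and eventually drops below `Sᵢᵢ` whenever `Sᵢᵢ` is positive.
-/

section Norms

variable {p q : ℕ}

lemma frobNorm_sq (M : Matrix (Fin p) (Fin q) ℝ) : frobNorm M ^ 2 = ∑ i, ∑ j, M i j ^ 2 :=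
  Real.sq_sqrt (by positivity)

lemma abs_apply_le_frobNorm (M : Matrix (Fin p) (Fin q) ℝ) (i : Fin p) (j : Fin q) :
    |M i j| ≤ frobNorm M :=
  Real.abs_le_sqrt <|
    calc M i j ^ 2 ≤ ∑ b, M i b ^ 2 :=
          Finset.single_le_sum (f := fun b ↦ M i b ^ 2) (fun _ _ ↦ sq_nonneg _) (Finset.mem_univ j)
      _ ≤ ∑ a, ∑ b, M a b ^ 2 :=
          Finset.single_le_sum (f := fun a ↦ ∑ b, M a b ^ 2) (fun _ _ ↦ by positivity)
            (Finset.mem_univ i)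

lemma frobNorm_eq_zero {M : Matrix (Fin p) (Fin q) ℝ} : frobNorm M = 0 ↔ M = 0 where
  mp h := by
    ext i j
    exact abs_nonpos_iff.1 (h ▸ abs_apply_le_frobNorm M i j)
  mpr h := by simp [frobNorm, h]

lemma singVals_nonneg (M : Matrix (Fin p) (Fin q) ℝ) (i : Fin q) : 0 ≤ singVals M i :=
  Real.sqrt_nonneg _

lemma sum_singVals_sq (M : Matrix (Fin p) (Fin q) ℝ) :
    ∑ i, singVals M i ^ 2 = frobNorm M ^ 2 := by
  have hM := posSemidef_conjTranspose_mul_self M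
  calc ∑ i, singVals M i ^ 2 = ∑ i, hM.isHermitian.eigenvalues i :=
        Finset.sum_congr rfl fun i _ ↦ Real.sq_sqrt (hM.eigenvalues_nonneg i)
    _ = (Mᴴ * M).trace := hM.isHermitian.trace_eq_sum_eigenvalues.symm
    _ = ∑ j, ∑ i, M i j ^ 2 := by simp [trace, mul_apply, sq]
    _ = frobNorm M ^ 2 := by rw [Finset.sum_comm, frobNorm_sq]

lemma nucNorm_nonneg (M : Matrix (Fin p) (Fin q) ℝ) : 0 ≤ nucNorm M :=
  Finset.sum_nonneg fun i _ ↦ singVals_nonneg M i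

lemma nucNorm_zero : nucNorm (0 : Matrix (Fin p) (Fin q) ℝ) = 0 := by
  have h : (posSemidef_conjTranspose_mul_self
      (0 : Matrix (Fin p) (Fin q) ℝ)).isHermitian.eigenvalues = 0 :=
    (IsHermitian.eigenvalues_eq_zero_iff _).2 (by simp)
  simp only [nucNorm, singVals, h, Pi.zero_apply, Real.sqrt_zero, Finset.sum_const_zero]

lemma frobNorm_le_nucNorm (M : Matrix (Fin p) (Fin q) ℝ) : frobNorm M ≤ nucNorm M :=
  le_of_sq_le_sq
    (calc frobNorm M ^ 2 = ∑ i, singVals M i ^ 2 := (sum_singVals_sq M).symm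
      _ ≤ nucNorm M ^ 2 := Finset.sum_sq_le_sq_sum_of_nonneg fun i _ ↦ singVals_nonneg M i)
    (nucNorm_nonneg M)

lemma apply_le_nucNorm (M : Matrix (Fin p) (Fin q) ℝ) (i : Fin p) (j : Fin q) :
    M i j ≤ nucNorm M :=
  (le_abs_self _).trans <| (abs_apply_le_frobNorm M i j).trans (frobNorm_le_nucNorm M)

end Norms

section Minimizer

variable {p : ℕ} {τ : ℝ} {S L D : Matrix (Fin p) (Fin p) ℝ}

lemma pdiag_pdiag (M : Matrix (Fin p) (Fin p) ℝ) : pdiag (pdiag M) = pdiag M := by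
  ext i j
  by_cases h : i = j <;> simp [pdiag, h]

lemma frobNorm_sub_sq_of_eq_pdiag (M : Matrix (Fin p) (Fin p) ℝ) (hD : D = pdiag D) :
    frobNorm (M - D) ^ 2 = frobNorm (pdiag M - D) ^ 2 + frobNorm (poffdiag M) ^ 2 := by
  simp only [frobNorm_sq, ← Finset.sum_add_distrib]
  refine Finset.sum_congr rfl fun i _ ↦ Finset.sum_congr rfl fun j _ ↦ ?_
  rw [hD]
  by_cases h : i = j <;> simp [pdiag, poffdiag, h]

lemma objF_of_eq_pdiag (τ : ℝ) (S L : Matrix (Fin p) (Fin p) ℝ) (hD : D = pdiag D) :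
    objF τ S L D = τ * nucNorm L +
      (1 / 2) * (frobNorm (pdiag (S - L) - D) ^ 2 + frobNorm (poffdiag (S - L)) ^ 2) := by
  rw [objF, sub_add_eq_sub_sub, frobNorm_sub_sq_of_eq_pdiag _ hD]

lemma objF_zero_pdiag (τ : ℝ) (S : Matrix (Fin p) (Fin p) ℝ) :
    objF τ S 0 (pdiag S) = (1 / 2) * frobNorm (poffdiag S) ^ 2 := by
  simp [objF, nucNorm_zero, poffdiag]

lemma IsRMTFAMin.eq_pdiag_sub (h : IsRMTFAMin τ S L D) : D = pdiag (S - L) := by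
  obtain ⟨hL, hD, hmin⟩ := h
  have hdiag : pdiag (S - L) = pdiag (pdiag (S - L)) := (pdiag_pdiag _).symm
  have hle := hmin L (pdiag (S - L)) hL hdiag
  rw [objF_of_eq_pdiag τ S L hD, objF_of_eq_pdiag τ S L hdiag, sub_self,
    frobNorm_eq_zero.2 rfl] at hle
  have hzero : frobNorm (pdiag (S - L) - D) = 0 :=
    sq_nonpos_iff _ |>.1 (by linarith)
  exact (sub_eq_zero.1 (frobNorm_eq_zero.1 hzero)).symm

lemma IsRMTFAMin.apply_self (h : IsRMTFAMin τ S L D) (i : Fin p) : D i i = S i i - L i i := by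
  simp [h.eq_pdiag_sub, pdiag]

lemma IsRMTFAMin.mul_nucNorm_le (h : IsRMTFAMin τ S L D) :
    τ * nucNorm L ≤ (1 / 2) * frobNorm (poffdiag S) ^ 2 :=
  calc τ * nucNorm L ≤ objF τ S L D := le_add_of_nonneg_right (by positivity)
    _ ≤ objF τ S 0 (pdiag S) := h.2.2 0 (pdiag S) .zero (pdiag_pdiag S).symm
    _ = (1 / 2) * frobNorm (poffdiag S) ^ 2 := objF_zero_pdiag τ S

lemma IsRMTFAMin.apply_self_pos (h : IsRMTFAMin τ S L D) (hτ : 0 < τ) {i : Fin p}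
    (hi : (1 / 2) * frobNorm (poffdiag S) ^ 2 < τ * S i i) : 0 < D i i := by
  have hnuc : nucNorm L < S i i := lt_of_mul_lt_mul_left (h.mul_nucNorm_le.trans_lt hi) hτ.le
  rw [h.apply_self i, sub_pos]
  exact (apply_le_nucNorm L i i).trans_lt hnuc

end Minimizer

theorem rmtfa_no_heywood_general {p : ℕ} (S : Matrix (Fin p) (Fin p) ℝ) :
    ∃ τ₀ : ℝ, 0 < τ₀ ∧ ∀ τ : ℝ, τ₀ ≤ τ → ∀ L D : Matrix (Fin p) (Fin p) ℝ,
      IsRMTFAMin τ S L D → ∀ i, 0 < S i i → 0 < D i i := by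
  have hlarge : ∀ᶠ τ : ℝ in Filter.atTop,
      ∀ i, 0 < S i i → (1 / 2) * frobNorm (poffdiag S) ^ 2 < τ * S i i :=
    Filter.eventually_all.2 fun i ↦ Filter.eventually_imp_distrib_left.2 fun hi ↦
      (Filter.tendsto_id.atTop_mul_const hi).eventually_gt_atTop _
  obtain ⟨τ₀, hτ₀⟩ := ((Filter.eventually_gt_atTop 0).and hlarge).exists_forall_of_atTop
  exact ⟨τ₀, (hτ₀ τ₀ le_rfl).1, fun τ hτ L D h i hi ↦
    h.apply_self_pos (hτ₀ τ hτ).1 ((hτ₀ τ hτ).2 i hi)⟩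

/-- no Heywood cases for large `τ`: if `Σ ∈ S^p` has strictly positive
diagonal entries, then for all sufficiently large `τ` every diagonal entry of the
relaxed-MTFA solution `D̂(τ)` is strictly positive. -/
theorem rmtfa_no_heywood (p : ℕ) (S : Matrix (Fin p) (Fin p) ℝ) (hS : S.IsHermitian)
    (hdiag : ∀ i, 0 < S i i)
    (Lhat Dhat : ℝ → Matrix (Fin p) (Fin p) ℝ)
    (hmin : ∀ τ : ℝ, 0 < τ → IsRMTFAMin τ S (Lhat τ) (Dhat τ)) :
    ∃ τ₀ : ℝ, 0 < τ₀ ∧ ∀ τ : ℝ, τ₀ ≤ τ → ∀ i, 0 < Dhat τ i i := by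
  obtain ⟨τ₀, hτ₀, hpos⟩ := rmtfa_no_heywood_general S
  exact ⟨τ₀, hτ₀, fun τ hτ i ↦ hpos τ hτ _ _ (hmin τ (hτ₀.trans_le hτ)) i (hdiag i)⟩
end
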